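/- Let $(N,X,V)$ be a locally automorphic Lie system whose Vessiot–Guldberg Lie algebra $V$ is unimodular, and let $\eta^1,\ldots,\eta^r$ be a basis of one-forms dual to a basis of $V$ (i.e., one-forms whose contractions with all elements of $V$ are constant). Then $\Theta=\eta^1\wedge\cdots\wedge\eta^r$ is a volume form on $N$ satisfying $\mathcal{L}_Z\Theta=0$ for every $Z\in V$; hence $(N,\Theta,X)$ is a multisymplectic Lie system. Moreover, $\Theta$ is also invariant with respect to the Lie derivatives along all elements of the Lie algebra of symmetries $\mathrm{Sym}(V)$. -/

import Mathlib

/-!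
For any smooth vector field `Y` and any point `x`, differentiating the duality relations
`η^i(X_j) = δ_ij` along `Y` gives `(L_Y η^i)(X_j) = -η^i([Y, X_j])`. Since the `X_j` form a frame,
`L_Y η^i = ∑_j C_ij η^j` with `C_ij = -η^i([Y, X_j])`, and since the Lie derivative acts on
`η¹ ∧ ⋯ ∧ η^r` as a derivation, `L_Y Θ = tr(C) Θ` (`lieD_det_eq_trace_mul`).

For `Y = Z ∈ V` the matrix `-C` is, at every point, the matrix of `ad_Z` in the basis `X_j` of `V`,
so its trace vanishes by unimodularity; for `Y ∈ Sym(V)` all brackets `[Y, X_j]` vanish and `C = 0`.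
Finally `Θ(X_1, …, X_r) = det 1 = 1`, so `Θ` vanishes nowhere.
-/

/-!
STATEMENT 11. Let `(N, X, V)` be a locally automorphic Lie system with unimodular
Vessiot–Guldberg Lie algebra `V`, and let `η¹, …, η^r` be a basis of one-forms dual to a basis
of `V`.  Then `Θ = η¹ ∧ ⋯ ∧ η^r` is a volume form on `N` with `L_Z Θ = 0` for every `Z ∈ V`;
hence `(N, Θ, X)` is a multisymplectic Lie system.  Moreover `Θ` is invariant with respect to
all elements of the Lie algebra of symmetries `Sym(V)`.

We work in a chart: `N = F` is a finite-dimensional real normed space; forms are unbundled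
and the wedge of the `r` one-forms is given by the determinant formula.  Unimodularity of `V`
is expressed by the tracelessness of the adjoint representation `ad_Z W = [Z, W]` of `V`. -/

open scoped ContDiff BigOperators

noncomputable section

/-- A differential `k`-form, unbundled. -/
abbrev DForm (E : Type*) (k : ℕ) : Type _ := E → (Fin k → E) → ℝ

variable {E : Type*} [NormedAddCommGroup E] [NormedSpace ℝ E]

/-- `om` is pointwise an alternating multilinear map. -/
def IsDForm {k : ℕ} (om : DForm E k) : Prop :=
  ∀ x : E, ∃ A : AlternatingMap ℝ E ℝ (Fin k), ∀ v, om x v = A v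

/-- `om` has smooth coefficients. -/
def SmoothDForm {k : ℕ} (om : DForm E k) : Prop :=
  ∀ v : Fin k → E, ContDiff ℝ ∞ (fun x => om x v)

/-- Lie derivative of a differential form along a vector field. -/
def lieD {k : ℕ} (X : E → E) (om : DForm E k) : DForm E k :=
  fun x v => fderiv ℝ (fun y => om y v) x (X x)
    + ∑ i : Fin k, om x (Function.update v i (fderiv ℝ X x (v i)))

/-- Each side is `tr(adj(A) * C * A)`: the left one by Cramer's rule, the right one by cyclicity
of the trace. -/
theorem sum_det_updateCol_mul {n : Type*} [Fintype n] [DecidableEq n] (A C : Matrix n n ℝ) :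
    ∑ j, (A.updateCol j (fun i => (C * A) i j)).det = C.trace * A.det := by
  have h : ∀ j, (A.updateCol j (fun i => (C * A) i j)).det = (A.adjugate * (C * A)) j j := by
    intro j
    rw [← Matrix.cramer_apply, Matrix.cramer_eq_adjugate_mulVec]
    rfl
  simp_rw [h]
  change (A.adjugate * (C * A)).trace = _
  rw [← Matrix.mul_assoc, Matrix.trace_mul_comm, ← Matrix.mul_assoc, Matrix.mul_adjugate]
  simp [mul_comm]

/-- Jacobi's formula, as a sum over columns. -/
theorem hasFDerivAt_det_apply {n : Type*} [Fintype n] [DecidableEq n]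
    {M : E → Matrix n n ℝ} {M' : n → n → E →L[ℝ] ℝ} {x : E}
    (hM : ∀ i j, HasFDerivAt (fun y => M y i j) (M' i j) x) (u : E) :
    fderiv ℝ (fun y => (M y).det) x u
      = ∑ j, ((M x).updateCol j (fun i => M' i j u)).det := by
  let D : ContinuousMultilinearMap ℝ (fun _ : n => n → ℝ) ℝ :=
    { (Matrix.detRowAlternating : (n → ℝ) [⋀^n]→ₗ[ℝ] ℝ).toMultilinearMap with
      cont := Continuous.matrix_det (A := fun m : n → n → ℝ => Matrix.of m) continuous_id }
  have hD : ∀ m : n → n → ℝ, D m = (Matrix.of m).det := fun m => rfl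
  have hg : HasFDerivAt (fun y => (fun j i => M y i j : n → n → ℝ))
      (ContinuousLinearMap.pi fun j => ContinuousLinearMap.pi fun i => M' i j) x :=
    hasFDerivAt_pi.2 fun j => hasFDerivAt_pi.2 fun i => hM i j
  have hc := (D.hasFDerivAt (fun j i => M x i j)).comp x hg
  have he : (fun y => (M y).det) = D ∘ fun y => (fun j i => M y i j : n → n → ℝ) := by
    funext y
    rw [Function.comp_apply, hD, ← Matrix.det_transpose]
    rfl
  rw [he, hc.fderiv, ContinuousLinearMap.comp_apply, ContinuousMultilinearMap.linearDeriv_apply]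
  refine Finset.sum_congr rfl fun j _ => ?_
  rw [hD, ← Matrix.det_transpose]
  congr 1
  ext a b
  by_cases hb : b = j
  · subst hb
    simp
  · simp [Function.update_of_ne hb, Matrix.updateCol_ne hb]

/-- A smooth unbundled one-form on a finite-dimensional space comes from a smooth map into the
dual space. -/
theorem exists_smooth_dual {F : Type*} [NormedAddCommGroup F] [NormedSpace ℝ F]
    [FiniteDimensional ℝ F] (om : DForm F 1) (hf : IsDForm om) (hs : SmoothDForm om) :
    ∃ L : F → F →L[ℝ] ℝ, ContDiff ℝ ∞ L ∧ ∀ x w, om x (fun _ => w) = L x w := by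
  choose A hA using hf
  let l : F → F →ₗ[ℝ] ℝ := fun x =>
    { toFun := fun w => om x (fun _ => w)
      map_add' := fun a b => by
        simp only [hA]
        have := (A x).map_update_add (fun _ => 0) 0 a b
        have h : ∀ c : F, Function.update (fun _ : Fin 1 => (0 : F)) 0 c = fun _ => c := by
          intro c; ext i; simp [Subsingleton.elim i 0]
        simpa only [h] using this
      map_smul' := fun c a => by
        simp only [hA]
        have := (A x).map_update_smul (fun _ => 0) 0 c a
        have h : ∀ c : F, Function.update (fun _ : Fin 1 => (0 : F)) 0 c = fun _ => c := by
          intro c; ext i; simp [Subsingleton.elim i 0]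
        simpa only [h, RingHom.id_apply] using this }
  refine ⟨fun x => LinearMap.toContinuousLinearMap (l x), ?_, fun x w => rfl⟩
  rw [contDiff_clm_apply_iff]
  exact fun w => hs fun _ => w

/-- The Lie derivative of `η¹ ∧ ⋯ ∧ η^r` along an arbitrary vector field `Y`, for a coframe `η^i`
dual to a frame `X_j`; the coframe is given by maps `L i` into the dual space. -/
theorem lieD_det_eq_trace_mul {F : Type*} [NormedAddCommGroup F] [NormedSpace ℝ F]
    [FiniteDimensional ℝ F] (r : ℕ) (hrF : Module.finrank ℝ F = r)
    (Xs : Fin r → F → F) (hXs : ∀ i, ContDiff ℝ ∞ (Xs i))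
    (hli : ∀ x : F, LinearIndependent ℝ fun i => Xs i x)
    (L : Fin r → F → F →L[ℝ] ℝ) (hL : ∀ i, ContDiff ℝ ∞ (L i))
    (hdual : ∀ i j x, L i x (Xs j x) = if i = j then (1 : ℝ) else 0)
    (Y : F → F) (x : F) (v : Fin r → F) :
    lieD Y (fun x v => Matrix.det (Matrix.of fun i j => L i x (v j))) x v
      = (Matrix.of fun i j => -L i x (VectorField.lieBracket ℝ Y (Xs j) x)).trace
        * Matrix.det (Matrix.of fun i j => L i x (v j)) := by
  set C : Matrix (Fin r) (Fin r) ℝ :=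
    Matrix.of fun i j => -L i x (VectorField.lieBracket ℝ Y (Xs j) x) with hC
  have hLd : ∀ i, HasFDerivAt (L i) (fderiv ℝ (L i) x) x := fun i =>
    ((hL i).differentiable (by simp) x).hasFDerivAt
  have hXd : ∀ i, HasFDerivAt (Xs i) (fderiv ℝ (Xs i) x) x := fun i =>
    ((hXs i).differentiable (by simp) x).hasFDerivAt
  have hframe : ∀ i j, fderiv ℝ (L i) x (Y x) (Xs j x) + L i x (fderiv ℝ Y x (Xs j x)) = C i j := by
    intro i j
    have h1 := (hLd i).clm_apply (hXd j)
    have h2 : HasFDerivAt (fun y => L i y (Xs j y)) (0 : F →L[ℝ] ℝ) x := by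
      simp only [hdual]
      exact hasFDerivAt_const _ _
    have h3 := congrArg (fun T : F →L[ℝ] ℝ => T (Y x)) (h1.unique h2)
    simp only [add_apply, ContinuousLinearMap.comp_apply,
      ContinuousLinearMap.flip_apply, zero_apply] at h3
    simp only [hC, Matrix.of_apply, VectorField.lieBracket, map_sub]
    linarith
  -- both sides are linear in `w`, so it suffices to compare them on the frame
  have hlie : ∀ i w, fderiv ℝ (L i) x (Y x) w + L i x (fderiv ℝ Y x w) = ∑ k, C i k * L k x w := by
    intro i w
    let T₁ : F →ₗ[ℝ] ℝ := (fderiv ℝ (L i) x (Y x) + (L i x).comp (fderiv ℝ Y x) : F →L[ℝ] ℝ)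
    let T₂ : F →ₗ[ℝ] ℝ := (∑ k, C i k • L k x : F →L[ℝ] ℝ)
    have hspan : ⊤ ≤ Submodule.span ℝ (Set.range fun j => Xs j x) :=
      ((hli x).span_eq_top_of_card_eq_finrank' (by simp [hrF])).ge
    have hT : T₁ = T₂ := by
      refine LinearMap.ext_on_range (v := fun j => Xs j x) (top_le_iff.1 hspan) fun j => ?_
      have := hframe i j
      simp [T₁, T₂, hdual, this]
    have := LinearMap.congr_fun hT w
    simpa [T₁, T₂] using this
  have hM : ∀ i j, HasFDerivAt (fun y => (Matrix.of fun i j => L i y (v j) :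
      Matrix (Fin r) (Fin r) ℝ) i j) ((fderiv ℝ (L i) x).flip (v j)) x := by
    intro i j
    have := (hLd i).clm_apply (hasFDerivAt_const (v j) x)
    simpa using this
  rw [← sum_det_updateCol_mul]
  unfold lieD
  rw [hasFDerivAt_det_apply hM, ← Finset.sum_add_distrib]
  refine Finset.sum_congr rfl fun j _ => ?_
  have hupd : (Matrix.of fun i k => L i x (Function.update v j (fderiv ℝ Y x (v j)) k))
      = (Matrix.of fun i k => L i x (v k)).updateCol j (fun i => L i x (fderiv ℝ Y x (v j))) := by
    ext a b
    by_cases hb : b = j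
    · subst hb
      simp
    · simp [Function.update_of_ne hb, Matrix.updateCol_ne hb]
  beta_reduce
  rw [hupd, ← Matrix.det_updateCol_add]
  congr 2
  funext i
  simpa [Matrix.mul_apply] using hlie i (v j)

theorem statement_11
    {F : Type*} [NormedAddCommGroup F] [NormedSpace ℝ F] [FiniteDimensional ℝ F]
    (r : ℕ) (hrF : Module.finrank ℝ F = r)
    -- the Vessiot–Guldberg Lie algebra `V` of the locally automorphic Lie system
    (V : Submodule ℝ (F → F))
    (hVsmooth : ∀ Z ∈ V, ContDiff ℝ ∞ Z)
    (hVcl : ∀ Z ∈ V, ∀ W ∈ V, VectorField.lieBracket ℝ Z W ∈ V)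
    (hVdim : Module.finrank ℝ V = r)
    (hVspan : ∀ p : F, Submodule.span ℝ {w : F | ∃ Z ∈ V, Z p = w} = ⊤)
    -- the system `X` takes values in `V`
    (X : ℝ → F → F) (hX : ∀ t, X t ∈ V)
    -- `V` is unimodular: the adjoint representation `ad_Z W = [Z, W]` of `V` is traceless
    (ad : V →ₗ[ℝ] Module.End ℝ V)
    (had : ∀ Z W : V, (↑(ad Z W) : F → F) =
      VectorField.lieBracket ℝ (↑Z : F → F) (↑W : F → F))
    (huni : ∀ Z : V, LinearMap.trace ℝ V (ad Z) = 0)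
    -- a basis `X₁, …, X_r` of `V` and the dual basis of one-forms `η¹, …, η^r`
    (Xs : Fin r → F → F) (hXs : ∀ i, Xs i ∈ V)
    (hXsbasis : ∀ x : F, LinearIndependent ℝ fun i => Xs i x)
    (eta : Fin r → DForm F 1)
    (hetaform : ∀ i, IsDForm (eta i))
    (hetasmooth : ∀ i, SmoothDForm (eta i))
    (hdual : ∀ i j x, eta i x (fun _ => Xs j x) = if i = j then (1 : ℝ) else 0)
    -- the form `Θ = η¹ ∧ ⋯ ∧ η^r`
    (Θ : DForm F r)
    (hΘ : Θ = fun x v => Matrix.det (Matrix.of fun i j => eta i x (fun _ => v j))) :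
    -- conclusions: `Θ` is a volume form (top-degree, nowhere vanishing), it is invariant
    -- under all elements of `V` (hence `(N, Θ, X)` is a multisymplectic Lie system, `Θ` being
    -- a multisymplectic form compatible with `X`), and it is invariant under all Lie
    -- symmetries of `V`
    (∀ x : F, ∃ v : Fin r → F, Θ x v ≠ 0) ∧
    (∀ Z ∈ V, lieD Z Θ = 0) ∧
    (∀ t, lieD (X t) Θ = 0) ∧
    (∀ Y : F → F, ContDiff ℝ ∞ Y →
      (∀ Z ∈ V, VectorField.lieBracket ℝ Z Y = 0) → lieD Y Θ = 0) := by
  choose L hLs hL using fun i => exists_smooth_dual (eta i) (hetaform i) (hetasmooth i)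
  simp only [hL] at hdual hΘ
  have key := lieD_det_eq_trace_mul r hrF Xs (fun i => hVsmooth _ (hXs i)) hXsbasis L hLs hdual
  have hV : ∀ Z ∈ V, lieD Z Θ = 0 := by
    intro Z hZ
    funext x v
    rw [hΘ, key]
    let b' : Fin r → V := fun i => ⟨Xs i, hXs i⟩
    let evx : V →ₗ[ℝ] F := (LinearMap.proj x).comp V.subtype
    have hli : LinearIndependent ℝ b' := LinearIndependent.of_comp evx (hXsbasis x)
    have hfin : Module.Finite ℝ V := by
      rcases Nat.eq_zero_or_pos r with h0 | h0
      · -- here `finrank ℝ V = 0` could be a junk value, but `F` is a point and so is `F → F`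
        have : Subsingleton F := Module.finrank_zero_iff.1 (hrF.trans h0)
        infer_instance
      · exact Module.finite_of_finrank_pos (hVdim ▸ h0)
    let b : Module.Basis (Fin r) ℝ V := Module.Basis.mk hli
      (hli.span_eq_top_of_card_eq_finrank' (by simp [hVdim])).ge
    have hb : ∀ i, b i = b' i := fun i => by simp [b]
    have hmat : ∀ i j, L i x (VectorField.lieBracket ℝ Z (Xs j) x)
        = LinearMap.toMatrix b b (ad ⟨Z, hZ⟩) i j := by
      intro i j
      rw [LinearMap.toMatrix_apply]
      have h1 : VectorField.lieBracket ℝ Z (Xs j) x = evx (ad ⟨Z, hZ⟩ (b j)) := by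
        rw [hb]
        exact (congrFun (had ⟨Z, hZ⟩ (b' j)) x).symm
      have h2 : ∀ k, evx (b k) = Xs k x := fun k => by rw [hb]; rfl
      have h3 := congrArg evx (b.sum_repr (ad ⟨Z, hZ⟩ (b j)))
      rw [h1, ← h3]
      simp only [map_sum, map_smul, h2, hdual, smul_eq_mul]
      simp
    have htr := huni ⟨Z, hZ⟩
    rw [LinearMap.trace_eq_matrix_trace ℝ b] at htr
    simp only [Matrix.trace, Matrix.diag] at htr ⊢
    simp [hmat, Finset.sum_neg_distrib, htr]
  refine ⟨fun x => ⟨fun j => Xs j x, ?_⟩, hV, fun t => hV _ (hX t), fun Y _ hY => ?_⟩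
  · have h1 : (Matrix.of fun i j => L i x (Xs j x)) = (1 : Matrix (Fin r) (Fin r) ℝ) := by
      ext i j
      simp [hdual, Matrix.one_apply]
    simp [hΘ, h1]
  · funext x v
    rw [hΘ, key]
    have h0 : ∀ j, VectorField.lieBracket ℝ Y (Xs j) x = 0 := by
      intro j
      rw [VectorField.lieBracket_swap, hY _ (hXs j), Pi.zero_apply, neg_zero]
    simp [h0, Matrix.trace]

end
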